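/- Let r, s ∈ ℂ with (2r+s)(4r+s) ≠ 0. Let F₄⁺ ⊂ (ℂ⁴)* be the positive half of the root system F₄, consisting of the covectors e^i (1 ≤ i ≤ 4) and (1/2)(e^1 ± e^2 ± e^3 ± e^4) (all eight sign choices), each with multiplicity s, and e^i ± e^j (1 ≤ i < j ≤ 4), each with multiplicity r. Then for any λ ∈ ℂ with λ² = 108(2r+s)²/(4r+s), the triple (F₄⁺, c, λ) satisfies the trigonometric WDVV equations. -/

import Mathlib

open scoped Classical
open Finset

noncomputable section

/-- Evaluation of a covector `α` on a vector `x` in `ℂ^N`. -/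
def ev {N : ℕ} (α x : Fin N → ℂ) : ℂ := ∑ i, α i * x i

/-- The bilinear form `G_𝒜` associated to a configuration. -/
def Gform {N : ℕ} (A : Finset (Fin N → ℂ)) (c : (Fin N → ℂ) → ℂ)
    (u v : Fin N → ℂ) : ℂ :=
  ∑ α ∈ A, c α * ev α u * ev α v

/-- `(α ∧ β)(a, b) = α(a)β(b) - α(b)β(a)`. -/
def wedge {N : ℕ} (α β a b : Fin N → ℂ) : ℂ :=
  ev α a * ev β b - ev α b * ev β a

/-- Non-degeneracy of `G_𝒜`. -/
def Nondeg {N : ℕ} (A : Finset (Fin N → ℂ)) (c : (Fin N → ℂ) → ℂ) : Prop :=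
  ∀ u : Fin N → ℂ, (∀ v : Fin N → ℂ, Gform A c u v = 0) → u = 0

/-- `dual` assigns to each covector `γ ∈ 𝒜` its `G_𝒜`-dual vector `γ^∨`. -/
def IsDual {N : ℕ} (A : Finset (Fin N → ℂ)) (c : (Fin N → ℂ) → ℂ)
    (dual : (Fin N → ℂ) → Fin N → ℂ) : Prop :=
  ∀ γ ∈ A, ∀ v : Fin N → ℂ, Gform A c (dual γ) v = ev γ v

/-- `γ` is proportional to `α`. -/
def Collin {N : ℕ} (α γ : Fin N → ℂ) : Prop := ∃ t : ℂ, γ = t • α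

/-- `γ₁ ∼ γ₂` iff `γ₁ + γ₂` or `γ₁ - γ₂` is an integer multiple of `α`. -/
def SeriesRel {N : ℕ} (α γ₁ γ₂ : Fin N → ℂ) : Prop :=
  ∃ m : ℤ, γ₁ + γ₂ = (m : ℂ) • α ∨ γ₁ - γ₂ = (m : ℂ) • α

/-- `Γ` is an (maximal) `α`-series of the configuration `A`. -/
def IsSeries {N : ℕ} (A : Finset (Fin N → ℂ)) (α : Fin N → ℂ)
    (Γ : Finset (Fin N → ℂ)) : Prop :=
  Γ.Nonempty ∧ (∀ γ ∈ Γ, γ ∈ A ∧ ¬ Collin α γ) ∧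
    (∀ γ₁ ∈ Γ, ∀ γ₂ ∈ Γ, SeriesRel α γ₁ γ₂) ∧
    (∀ β ∈ A, ¬ Collin α β → (∃ γ ∈ Γ, SeriesRel α β γ) → β ∈ Γ)

/-- The trigonometric ∨-conditions. -/
def IsTrigVSystem {N : ℕ} (A : Finset (Fin N → ℂ)) (c : (Fin N → ℂ) → ℂ)
    (dual : (Fin N → ℂ) → Fin N → ℂ) : Prop :=
  ∀ α ∈ A, ∀ Γ : Finset (Fin N → ℂ), IsSeries A α Γ →
    ∀ a b : Fin N → ℂ, ∑ β ∈ Γ, c β * ev α (dual β) * wedge α β a b = 0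

/-- The form `G^{(1)}_𝒜` evaluated at `(u, v)`. -/
def G1form {N : ℕ} (A : Finset (Fin N → ℂ)) (c : (Fin N → ℂ) → ℂ)
    (u v : Fin N → ℂ) : ℂ :=
  ∑ α ∈ A, ∑ β ∈ A, c α * c β * wedge α β u v ^ 2

/-- The form `G^{(2)}_𝒜` evaluated at `(u, v)`. -/
def G2form {N : ℕ} (A : Finset (Fin N → ℂ)) (c : (Fin N → ℂ) → ℂ)
    (dual : (Fin N → ℂ) → Fin N → ℂ) (u v : Fin N → ℂ) : ℂ :=
  ∑ α ∈ A, ∑ β ∈ A,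
    c α * c β * Gform A c (dual α) (dual β) * wedge α β u v ^ 2

/-- Complex cotangent. -/
def ccot (z : ℂ) : ℂ := Complex.cos z / Complex.sin z

/-- The matrix `F_i(x)` of third derivatives of the prepotential, `1 ≤ i ≤ N`. -/
def Fmat {N : ℕ} (A : Finset (Fin N → ℂ)) (c : (Fin N → ℂ) → ℂ) (lam : ℂ)
    (i : Fin N) (x : Fin N → ℂ) : Matrix (Fin N ⊕ Unit) (Fin N ⊕ Unit) ℂ :=
  Matrix.of fun p q =>
    match p, q with
    | Sum.inl p, Sum.inl q => lam * ∑ α ∈ A, c α * α i * α p * α q * ccot (ev α x)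
    | Sum.inl p, Sum.inr _ => 2 * ∑ α ∈ A, c α * α i * α p
    | Sum.inr _, Sum.inl q => 2 * ∑ α ∈ A, c α * α i * α q
    | Sum.inr _, Sum.inr _ => 0

/-- The constant matrix `F_{N+1}`. -/
def Flast {N : ℕ} (A : Finset (Fin N → ℂ)) (c : (Fin N → ℂ) → ℂ) :
    Matrix (Fin N ⊕ Unit) (Fin N ⊕ Unit) ℂ :=
  Matrix.of fun p q =>
    match p, q with
    | Sum.inl p, Sum.inl q => 2 * ∑ α ∈ A, c α * α p * α q
    | Sum.inr _, Sum.inr _ => 2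
    | _, _ => 0

/-- `(𝒜, c, λ)` satisfies the trigonometric WDVV equations. -/
def SatisfiesWDVV {N : ℕ} (A : Finset (Fin N → ℂ)) (c : (Fin N → ℂ) → ℂ)
    (lam : ℂ) : Prop :=
  IsUnit (Flast A c) ∧
    ∀ x : Fin N → ℂ, (∀ α ∈ A, Complex.sin (ev α x) ≠ 0) →
      ∀ i j : Fin N,
        Fmat A c lam i x * (Flast A c)⁻¹ * Fmat A c lam j x =
          Fmat A c lam j x * (Flast A c)⁻¹ * Fmat A c lam i x

/-- The covectors of `𝒜` lie in a lattice of full rank `N` in `(ℂ^N)^*`. -/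
def InLattice {N : ℕ} (A : Finset (Fin N → ℂ)) : Prop :=
  ∃ L : Fin N → Fin N → ℂ, LinearIndependent ℂ L ∧
    ∀ α ∈ A, ∃ m : Fin N → ℤ, α = ∑ i, (m i : ℂ) • L i

/-- No two covectors of `𝒜` are negatively proportional. -/
def PositiveSystem {N : ℕ} (A : Finset (Fin N → ℂ)) : Prop :=
  ∀ α ∈ A, ∀ t : ℝ, t < 0 → (t : ℂ) • α ∉ A

/-- The standard covector `e^i` of `(ℂ^4)^*`. -/
def esgl4 (i : Fin 4) : Fin 4 → ℂ := Pi.single i 1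

/-- A sign `±1` attached to a boolean. -/
def sgn (b : Bool) : ℂ := if b then 1 else -1

/-- The covector `(1/2)(e^1 ± e^2 ± e^3 ± e^4)` attached to a triple of signs. -/
def halfvec (b : Bool × Bool × Bool) : Fin 4 → ℂ :=
  (1 / 2 : ℂ) • (esgl4 0 + sgn b.1 • esgl4 1 + sgn b.2.1 • esgl4 2 + sgn b.2.2 • esgl4 3)

/-- The positive half `F₄⁺` of the root system `F₄`: the covectors `e^i` (`1 ≤ i ≤ 4`),
`(1/2)(e^1 ± e^2 ± e^3 ± e^4)` and `e^i ± e^j` (`1 ≤ i < j ≤ 4`). -/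
def F4plus : Finset (Fin 4 → ℂ) :=
  (Finset.univ.image esgl4) ∪
  ((Finset.univ.filter (fun p : Fin 4 × Fin 4 => p.1 < p.2)).image
    (fun p => esgl4 p.1 + esgl4 p.2)) ∪
  ((Finset.univ.filter (fun p : Fin 4 × Fin 4 => p.1 < p.2)).image
    (fun p => esgl4 p.1 - esgl4 p.2)) ∪
  ((Finset.univ : Finset (Bool × Bool × Bool)).image halfvec)

/-! When `G_𝒜` is a multiple `g` of the standard inner product, the WDVV equations reduce to
`λ² [T_i, T_j] = -4 g³ (e_i e_jᵀ - e_j e_iᵀ)`, where `T_i = ∑ c_α cot α(x) α_i α ⊗ α`. The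
commutator is quadratic in the values `τ_α = cot α(x)`, and for `F₄⁺` this quadratic form is a
combination of the left-hand sides of the addition formulas
`τ_α τ_β - τ_{α+β} (τ_α + τ_β) = 1`. Hence it has the same value at every solution `τ` of these
equations, in particular at the constant `τ = √-1`, which leaves a finite computation with the
roots. There `g = 3 (2 r + s)` and `[T_i, T_j] = -(2 r + s) (4 r + s) (e_i e_jᵀ - e_j e_iᵀ)`. -/

section ThreeTerm

variable {V K : Type*} [AddCommGroup V] [DecidableEq V] [CommRing K]

/-- The functional equation of the cotangent, restricted to the values on a configuration `A`:
the equation `cot a cot b - cot (a + b) (cot a + cot b) = 1` for all `a, b, a + b ∈ A`. -/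
def IsThreeTermSolution (A : Finset V) (τ : V → K) : Prop :=
  ∀ α ∈ A, ∀ β ∈ A, α + β ∈ A → τ α * τ β - τ (α + β) * (τ α + τ β) = 1

lemma sum_sum_ite_sub_mem (A : Finset V) (f : V → V → K) :
    ∑ α ∈ A, ∑ β ∈ A, (if α - β ∈ A then f (α - β) β else 0) =
      ∑ α ∈ A, ∑ β ∈ A, if α + β ∈ A then f α β else 0 := by
  rw [sum_comm, sum_comm (f := fun α β => if α + β ∈ A then f α β else 0)]
  refine sum_congr rfl fun β _ => ?_
  rw [← sum_filter, ← sum_filter]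
  exact sum_nbij' (· - β) (· + β) (by simp +contextual) (by simp +contextual)
    (by simp) (by simp) (by simp)

lemma sum_sum_ite_sub_mem' (A : Finset V) (f : V → V → K) :
    ∑ α ∈ A, ∑ β ∈ A, (if β - α ∈ A then f α (β - α) else 0) =
      ∑ α ∈ A, ∑ β ∈ A, if α + β ∈ A then f α β else 0 := by
  rw [sum_comm, sum_sum_ite_sub_mem A (fun α β => f β α), sum_comm]
  simp only [add_comm]

/-- Distributes the weight `W α β` of each pair over the relations `a + b = g` in `A` containing
the pair, so that the quadratic expression in `τ` becomes a combination of three-term relations. -/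
theorem IsThreeTermSolution.sum_sum_eq {A : Finset V} {τ : V → K} (hτ : IsThreeTermSolution A τ)
    {W k B : V → V → K} (hB : ∀ α, B α α = 0) (hBl : ∀ α β, B (α + β) β = B α β)
    (hBr : ∀ α β, B α (α + β) = B α β)
    (hW : ∀ α ∈ A, ∀ β ∈ A, α ≠ β →
      W α β = (if α - β ∈ A then k (α - β) β else 0) + (if β - α ∈ A then k α (β - α) else 0) -
        if α + β ∈ A then k α β else 0) :
    ∑ α ∈ A, ∑ β ∈ A, W α β * B α β * (τ α * τ β) =
      -∑ α ∈ A, ∑ β ∈ A, if α + β ∈ A then k α β * B α β else 0 := by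
  have hsplit : ∀ α ∈ A, ∀ β ∈ A, W α β * B α β * (τ α * τ β) =
      (if α - β ∈ A then k (α - β) β * B (α - β) β * (τ (α - β + β) * τ β) else 0) +
        (if β - α ∈ A then k α (β - α) * B α (β - α) * (τ α * τ (α + (β - α))) else 0) -
        if α + β ∈ A then k α β * B α β * (τ α * τ β) else 0 := by
    intro α hα β hβ
    obtain rfl | hne := eq_or_ne α β
    · have hl : B 0 α = 0 := by rw [← hBl, zero_add, hB]
      have hr : B α 0 = 0 := by rw [← hBr, add_zero, hB]
      simp [hB, hl, hr]
    · rw [hW α hα β hβ hne, ← hBl (α - β) β, ← hBr α (β - α), sub_add_cancel, add_sub_cancel]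
      split_ifs <;> ring
  rw [sum_congr rfl fun α hα => sum_congr rfl (hsplit α hα)]
  simp only [sum_sub_distrib, sum_add_distrib]
  rw [sum_sum_ite_sub_mem A fun α β => k α β * B α β * (τ (α + β) * τ β),
    sum_sum_ite_sub_mem' A fun α β => k α β * B α β * (τ α * τ (α + β))]
  simp only [← sum_add_distrib, ← sum_sub_distrib, ← sum_neg_distrib]
  refine sum_congr rfl fun α hα => sum_congr rfl fun β hβ => ?_
  split_ifs with h
  · linear_combination -(k α β * B α β) * hτ α hα β hβ h
  · ring

end ThreeTerm

lemma isThreeTermSolution_const_I {V : Type*} [AddCommGroup V] (A : Finset V) :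
    IsThreeTermSolution A fun _ => Complex.I := fun _ _ _ _ _ => by
  linear_combination -Complex.I_sq

lemma ccot_mul_ccot_sub {a b : ℂ} (ha : Complex.sin a ≠ 0) (hb : Complex.sin b ≠ 0)
    (hab : Complex.sin (a + b) ≠ 0) :
    ccot a * ccot b - ccot (a + b) * (ccot a + ccot b) = 1 := by
  unfold ccot
  field_simp
  rw [Complex.sin_add, Complex.cos_add]
  ring

section Single

variable {n R : Type*} [DecidableEq n] [Semiring R]

lemma replicateRow_single_mul_replicateCol_single_comm [Fintype n] (i j : n) (a : R) :
    Matrix.replicateRow Unit (Pi.single i a) * Matrix.replicateCol Unit (Pi.single j a) =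
      Matrix.replicateRow Unit (Pi.single j a) * Matrix.replicateCol Unit (Pi.single i a) := by
  ext
  simp [Matrix.mul_apply, Pi.single_apply, eq_comm]

lemma replicateCol_single_mul_replicateRow_single (i j : n) (a b : R) :
    Matrix.replicateCol Unit (Pi.single i a) * Matrix.replicateRow Unit (Pi.single j b) =
      Matrix.single i j (a * b) := by
  ext p q
  simp [Matrix.mul_apply, Pi.single_apply, Matrix.single_apply, eq_comm]
  split_ifs <;> simp_all

end Single

section Lie

lemma lie_map_intCast {n R : Type*} [Fintype n] [Ring R] (X Y : Matrix n n ℤ) :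
    ⁅X.map (Int.cast : ℤ → R), Y.map (Int.cast : ℤ → R)⁆ = ⁅X, Y⁆.map (Int.cast : ℤ → R) := by
  ext p q
  simp [Ring.lie_def, Matrix.mul_apply]

lemma lie_smul_smul_add_smul {R A : Type*} [CommRing R] [Ring A] [Algebra R A] (t a b : R)
    (X Y X' Y' : A) :
    ⁅t • (a • X + b • Y), t • (a • X' + b • Y')⁆ =
      t ^ 2 • (a ^ 2 • ⁅X, X'⁆ + (a * b) • (⁅X, Y'⁆ + ⁅Y, X'⁆) + b ^ 2 • ⁅Y, Y'⁆) := by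
  simp only [Ring.lie_def, smul_mul_smul_comm, add_mul, mul_add]
  module

end Lie

section Configuration

variable {N : ℕ} (A : Finset (Fin N → ℂ)) (c : (Fin N → ℂ) → ℂ)

lemma ev_eq_dotProduct (α x : Fin N → ℂ) : ev α x = α ⬝ᵥ x := rfl

lemma isThreeTermSolution_ccot {x : Fin N → ℂ} (hx : ∀ α ∈ A, Complex.sin (ev α x) ≠ 0) :
    IsThreeTermSolution A fun α => ccot (ev α x) := by
  intro α hα β hβ hαβ
  have hsum := hx _ hαβ
  rw [ev_eq_dotProduct, add_dotProduct] at hsum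
  simpa only [ev_eq_dotProduct, add_dotProduct] using
    ccot_mul_ccot_sub (hx α hα) (hx β hβ) hsum

lemma wedge_single (α β : Fin N → ℂ) (i j : Fin N) :
    wedge α β (Pi.single i 1) (Pi.single j 1) = α i * β j - β i * α j := by
  simp [wedge, ev_eq_dotProduct, mul_comm]

lemma wedge_self (α a b : Fin N → ℂ) : wedge α α a b = 0 :=
  sub_eq_zero.2 (mul_comm _ _)

lemma wedge_add_left_self (α β a b : Fin N → ℂ) : wedge (α + β) β a b = wedge α β a b := by
  simp only [wedge, ev_eq_dotProduct, add_dotProduct]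
  ring

lemma wedge_self_add_right (α β a b : Fin N → ℂ) : wedge α (α + β) a b = wedge α β a b := by
  simp only [wedge, ev_eq_dotProduct, add_dotProduct]
  ring

/-- The Gram matrix of the bilinear form `Gform A c`. -/
def gramMatrix : Matrix (Fin N) (Fin N) ℂ := ∑ α ∈ A, c α • Matrix.vecMulVec α α

/-- The matrix `∑ c_α τ_α α_i α ⊗ α`. With `τ_α = cot α(x)` it is, up to the factor `λ`, the
principal block of `F_i(x)`. -/
def cubicMatrix (τ : (Fin N → ℂ) → ℂ) (i : Fin N) : Matrix (Fin N) (Fin N) ℂ :=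
  ∑ α ∈ A, (c α * α i * τ α) • Matrix.vecMulVec α α

/-- The coefficient of `τ_α τ_β` in the commutators of the matrices `cubicMatrix A c τ i`, for
the standard inner product. -/
def pairWeight (α β : Fin N → ℂ) : ℂ := c α * c β * (α ⬝ᵥ β)

/-- The coefficient of the three-term relation on `α`, `β`, `α + β` in the commutators. For `c`
extended evenly to `-A`, the non-orthogonal pairs among `α`, `β`, `-(α + β)` are expected to have
a common `pairWeight`, and this is its negative. -/
def relationWeight (α β : Fin N → ℂ) : ℂ :=
  if α ⬝ᵥ β = 0 then pairWeight c α (α + β) else -pairWeight c α β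

/-- The weight of each pair in `A` is accounted for by the weights of the relations `a + b = g`
in `A` that contain the pair: positively when one of its members is `g`, negatively otherwise. -/
def IsThreeTermBalanced : Prop :=
  ∀ α ∈ A, ∀ β ∈ A, α ≠ β → pairWeight c α β =
    (if α - β ∈ A then relationWeight c (α - β) β else 0) +
      (if β - α ∈ A then relationWeight c α (β - α) else 0) -
      if α + β ∈ A then relationWeight c α β else 0

variable {A c}

lemma gramMatrix_apply (p q : Fin N) : gramMatrix A c p q = ∑ α ∈ A, c α * α p * α q := by
  simp only [gramMatrix, Matrix.sum_apply, Matrix.smul_apply, Matrix.vecMulVec_apply, smul_eq_mul,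
    mul_assoc]

lemma cubicMatrix_apply (τ : (Fin N → ℂ) → ℂ) (i p q : Fin N) :
    cubicMatrix A c τ i p q = ∑ α ∈ A, c α * α i * α p * α q * τ α := by
  simp only [cubicMatrix, Matrix.sum_apply, Matrix.smul_apply, Matrix.vecMulVec_apply, smul_eq_mul]
  exact sum_congr rfl fun α _ => by ring

lemma cubicMatrix_apply_swap_left (τ : (Fin N → ℂ) → ℂ) (i p q : Fin N) :
    cubicMatrix A c τ i p q = cubicMatrix A c τ p i q := by
  simp only [cubicMatrix_apply, mul_right_comm (c _)]

lemma cubicMatrix_apply_swap_right (τ : (Fin N → ℂ) → ℂ) (i p q : Fin N) :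
    cubicMatrix A c τ i p q = cubicMatrix A c τ q p i := by
  simp only [cubicMatrix_apply]
  exact sum_congr rfl fun α _ => by ring

lemma cubicMatrix_mul_replicateCol_comm (τ : (Fin N → ℂ) → ℂ) (i j : Fin N) (a : ℂ) :
    cubicMatrix A c τ i * Matrix.replicateCol Unit (Pi.single j a) =
      cubicMatrix A c τ j * Matrix.replicateCol Unit (Pi.single i a) := by
  ext p
  simp [Matrix.mul_apply, Pi.single_apply, cubicMatrix_apply_swap_right τ i p j]

lemma replicateRow_mul_cubicMatrix_comm (τ : (Fin N → ℂ) → ℂ) (i j : Fin N) (a : ℂ) :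
    Matrix.replicateRow Unit (Pi.single i a) * cubicMatrix A c τ j =
      Matrix.replicateRow Unit (Pi.single j a) * cubicMatrix A c τ i := by
  ext p q
  simp [Matrix.mul_apply, Pi.single_apply, cubicMatrix_apply_swap_left τ i j q]

lemma cubicMatrix_mul_apply (τ : (Fin N → ℂ) → ℂ) (i j p q : Fin N) :
    (cubicMatrix A c τ i * cubicMatrix A c τ j) p q =
      ∑ α ∈ A, ∑ β ∈ A, pairWeight c α β * (τ α * τ β) * (α i * β j * (α p * β q)) := by
  simp only [cubicMatrix, sum_mul_sum, Matrix.smul_mul, Matrix.mul_smul,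
    Matrix.vecMulVec_mul_vecMulVec, Matrix.sum_apply, Matrix.smul_apply, Matrix.vecMulVec_apply,
    Pi.smul_apply, smul_eq_mul, pairWeight]
  exact sum_congr rfl fun α _ => sum_congr rfl fun β _ => by ring

lemma two_mul_lie_cubicMatrix_apply (τ : (Fin N → ℂ) → ℂ) (i j p q : Fin N) :
    2 * ⁅cubicMatrix A c τ i, cubicMatrix A c τ j⁆ p q =
      ∑ α ∈ A, ∑ β ∈ A, pairWeight c α β *
        (wedge α β (Pi.single i 1) (Pi.single j 1) * wedge α β (Pi.single p 1) (Pi.single q 1)) *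
        (τ α * τ β) := by
  set f : (Fin N → ℂ) → (Fin N → ℂ) → ℂ := fun α β =>
    pairWeight c α β * (τ α * τ β) * (α i * β j * (α p * β q)) -
      pairWeight c α β * (τ α * τ β) * (α j * β i * (α p * β q)) with hf
  have hlie : ⁅cubicMatrix A c τ i, cubicMatrix A c τ j⁆ p q = ∑ α ∈ A, ∑ β ∈ A, f α β := by
    simp only [Ring.lie_def, Matrix.sub_apply, cubicMatrix_mul_apply, hf, sum_sub_distrib]
  rw [two_mul, hlie]
  nth_rewrite 2 [sum_comm]
  simp only [← sum_add_distrib, wedge_single]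
  refine sum_congr rfl fun α _ => sum_congr rfl fun β _ => ?_
  simp only [hf, pairWeight, dotProduct_comm β α]
  ring

/-- The quadratic dependence on `τ` only enters through the three-term relations. -/
theorem IsThreeTermBalanced.lie_cubicMatrix_congr (hA : IsThreeTermBalanced A c)
    {τ σ : (Fin N → ℂ) → ℂ} (hτ : IsThreeTermSolution A τ) (hσ : IsThreeTermSolution A σ)
    (i j : Fin N) :
    ⁅cubicMatrix A c τ i, cubicMatrix A c τ j⁆ = ⁅cubicMatrix A c σ i, cubicMatrix A c σ j⁆ := by
  ext p q
  refine mul_left_cancel₀ (two_ne_zero' ℂ) ?_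
  simp only [two_mul_lie_cubicMatrix_apply]
  rw [hτ.sum_sum_eq _ _ _ hA, hσ.sum_sum_eq _ _ _ hA] <;>
    simp only [wedge_self, wedge_add_left_self, wedge_self_add_right, mul_zero, implies_true]

/-- When `A` lies in an open half-space, the constant solution `I` is the limit of `cot α(x)` as
`x` tends to infinity in a suitable imaginary direction. -/
theorem IsThreeTermBalanced.lie_cubicMatrix_ccot (hA : IsThreeTermBalanced A c) {x : Fin N → ℂ}
    (hx : ∀ α ∈ A, Complex.sin (ev α x) ≠ 0) (i j : Fin N) :
    ⁅cubicMatrix A c (fun α => ccot (ev α x)) i, cubicMatrix A c (fun α => ccot (ev α x)) j⁆ =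
      -⁅cubicMatrix A c 1 i, cubicMatrix A c 1 j⁆ := by
  have hI : ∀ i, cubicMatrix A c (fun _ => Complex.I) i = Complex.I • cubicMatrix A c 1 i := by
    intro i
    simp only [cubicMatrix, smul_sum, smul_smul, Pi.one_apply, mul_one, mul_comm Complex.I]
  rw [hA.lie_cubicMatrix_congr (isThreeTermSolution_ccot A hx) (isThreeTermSolution_const_I A),
    hI, hI]
  simp only [Ring.lie_def, smul_mul_smul_comm, Complex.I_mul_I, neg_one_smul]
  abel

/-- In block form, with blocks of sizes `N` and `1`, the matrices are
`F_i = [λ T_i, 2 g e_i; 2 g e_iᵀ, 0]` and `F_{N+1} = diag(2 g, …, 2 g, 2)`. -/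
lemma Fmat_eq_fromBlocks {g : ℂ} (hG : gramMatrix A c = g • 1)
    (lam : ℂ) (i : Fin N) (x : Fin N → ℂ) :
    Fmat A c lam i x = Matrix.fromBlocks (lam • cubicMatrix A c (fun α => ccot (ev α x)) i)
      (Matrix.replicateCol Unit (Pi.single i (2 * g)))
      (Matrix.replicateRow Unit (Pi.single i (2 * g))) 0 := by
  have hcol : ∀ i p, 2 * ∑ α ∈ A, c α * α i * α p = Pi.single (M := fun _ => ℂ) i (2 * g) p := by
    intro i p
    rw [← gramMatrix_apply, hG]
    simp [Pi.single_apply, Matrix.one_apply, eq_comm]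
  ext (p | p) (q | q)
  · simp [Fmat, cubicMatrix_apply]
  · simp [Fmat, hcol]
  · simp [Fmat, hcol]
  · simp [Fmat]

lemma Flast_eq_fromBlocks {g : ℂ} (hG : gramMatrix A c = g • 1) :
    Flast A c = Matrix.fromBlocks ((2 * g) • 1) 0 0 ((2 : ℂ) • 1) := by
  ext (p | p) (q | q)
  · simp only [Flast, Matrix.of_apply, ← gramMatrix_apply, hG]
    simp [mul_assoc]
  all_goals simp [Flast]

lemma fromBlocks_mul_inv_smul_one {g : ℂ} (hg : g ≠ 0) :
    (Matrix.fromBlocks ((2 * g) • 1) 0 0 ((2 : ℂ) • 1) : Matrix (Fin N ⊕ Unit) (Fin N ⊕ Unit) ℂ) *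
      Matrix.fromBlocks ((2 * g)⁻¹ • 1) 0 0 ((2 : ℂ)⁻¹ • 1) = 1 := by
  have hg' : 2 * g ≠ 0 := mul_ne_zero two_ne_zero hg
  simp [Matrix.fromBlocks_multiply, smul_smul, -mul_inv_rev, hg']

/-- The off-diagonal blocks agree by the symmetry of the cubic tensor, so only the commutator of
the principal blocks has to be balanced by the rank two matrices `2 g² (e_i e_jᵀ - e_j e_iᵀ)`. -/
theorem satisfiesWDVV_of_lie_cubicMatrix {g lam : ℂ} (hg : g ≠ 0)
    (hG : gramMatrix A c = g • 1)
    (hlie : ∀ x, (∀ α ∈ A, Complex.sin (ev α x) ≠ 0) → ∀ i j,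
      lam ^ 2 • ⁅cubicMatrix A c (fun α => ccot (ev α x)) i,
        cubicMatrix A c (fun α => ccot (ev α x)) j⁆ =
      (-4 * g ^ 3) • (Matrix.single i j 1 - Matrix.single j i 1)) :
    SatisfiesWDVV A c lam := by
  have hinv := fromBlocks_mul_inv_smul_one (N := N) hg
  rw [SatisfiesWDVV, Flast_eq_fromBlocks hG, Matrix.inv_eq_right_inv hinv]
  refine ⟨(Matrix.isUnit_iff_isUnit_det _).2 (Matrix.isUnit_det_of_right_inverse hinv),
    fun x hx i j => ?_⟩
  have hbalance := hlie x hx i j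
  have hrank : ∀ i j : Fin N, Matrix.single i j (2 * g * (2 * g)) =
      (4 * g ^ 2) • Matrix.single i j 1 := by
    intro i j
    rw [Matrix.smul_single, smul_eq_mul]
    congr 1
    ring
  simp only [Fmat_eq_fromBlocks hG, Matrix.fromBlocks_multiply, Matrix.mul_smul,
    Matrix.smul_mul, Matrix.mul_one, Matrix.mul_zero, Matrix.zero_mul, smul_zero, add_zero,
    zero_add, cubicMatrix_mul_replicateCol_comm _ i j, replicateRow_mul_cubicMatrix_comm _ i j,
    replicateRow_single_mul_replicateCol_single_comm i j,
    replicateCol_single_mul_replicateRow_single, hrank]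
  congr 1
  ext p q
  have hpq := congr_fun₂ hbalance p q
  simp only [Ring.lie_def, Matrix.smul_apply, Matrix.sub_apply, Matrix.add_apply,
    smul_eq_mul] at hpq ⊢
  field_simp
  linear_combination hpq

theorem IsThreeTermBalanced.satisfiesWDVV (hA : IsThreeTermBalanced A c) {g h lam : ℂ}
    (hg : g ≠ 0) (hG : gramMatrix A c = g • 1)
    (hlie : ∀ i j, ⁅cubicMatrix A c 1 i, cubicMatrix A c 1 j⁆ =
      h • (Matrix.single i j 1 - Matrix.single j i 1))
    (hlam : lam ^ 2 * h = 4 * g ^ 3) :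
    SatisfiesWDVV A c lam := by
  refine satisfiesWDVV_of_lie_cubicMatrix hg hG fun x hx i j => ?_
  rw [hA.lie_cubicMatrix_ccot hx, hlie, smul_neg, smul_smul, hlam, ← neg_smul, neg_mul]

end Configuration

section Halving

variable {N : ℕ}

/-- The embedding of doubled covectors, `v ↦ v / 2`. -/
def halve : (Fin N → ℤ) →+ (Fin N → ℂ) where
  toFun v i := v i / 2
  map_zero' := by ext; simp
  map_add' v w := by ext; simp [add_div]

lemma halve_apply (v : Fin N → ℤ) (i : Fin N) : halve v i = v i / 2 := rfl

lemma halve_injective : Function.Injective (halve (N := N)) := by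
  intro v w h
  ext i
  simpa [halve_apply] using congr_fun h i

lemma halve_dotProduct_halve (v w : Fin N → ℤ) :
    halve v ⬝ᵥ halve w = ((v ⬝ᵥ w : ℤ) : ℂ) / 4 := by
  simp only [dotProduct, halve_apply, Int.cast_sum, Int.cast_mul, sum_div]
  exact sum_congr rfl fun i _ => by ring

/-- Integral version of `gramMatrix`. -/
def doubledGram (R : Finset (Fin N → ℤ)) : Matrix (Fin N) (Fin N) ℤ :=
  ∑ v ∈ R, Matrix.vecMulVec v v

/-- Integral version of `cubicMatrix` for the constant function `1`. -/
def doubledCubic (R : Finset (Fin N → ℤ)) (i : Fin N) : Matrix (Fin N) (Fin N) ℤ :=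
  ∑ v ∈ R, v i • Matrix.vecMulVec v v

lemma sum_vecMulVec_halve (R : Finset (Fin N → ℤ)) :
    ∑ v ∈ R, Matrix.vecMulVec (halve v) (halve v) =
      (1 / 4 : ℂ) • (doubledGram R).map (Int.cast : ℤ → ℂ) := by
  ext p q
  simp only [doubledGram, Matrix.sum_apply, Matrix.vecMulVec_apply, halve_apply, Matrix.smul_apply,
    Matrix.map_apply, Int.cast_sum, Int.cast_mul, smul_eq_mul, mul_sum]
  exact sum_congr rfl fun v _ => by ring

lemma sum_smul_vecMulVec_halve (R : Finset (Fin N → ℤ)) (i : Fin N) :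
    ∑ v ∈ R, halve v i • Matrix.vecMulVec (halve v) (halve v) =
      (1 / 8 : ℂ) • (doubledCubic R i).map (Int.cast : ℤ → ℂ) := by
  ext p q
  simp only [doubledCubic, Matrix.sum_apply, Matrix.vecMulVec_apply, halve_apply,
    Matrix.smul_apply, Matrix.map_apply, Int.cast_sum, Int.cast_mul, smul_eq_mul, mul_sum]
  exact sum_congr rfl fun v _ => by ring

end Halving

section F4

/-- Twice the short covectors of `F₄⁺`. Doubling makes all coordinates integral, so that facts
about the finite configuration are decidable. -/
def doubledShort : Finset (Fin 4 → ℤ) :=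
  univ.image (fun i => Pi.single i 2) ∪
    (univ : Finset (Bool × Bool × Bool)).image fun b =>
      ![1, bif b.1 then 1 else -1, bif b.2.1 then 1 else -1, bif b.2.2 then 1 else -1]

/-- Twice the long covectors of `F₄⁺`. -/
def doubledLong : Finset (Fin 4 → ℤ) :=
  (univ.filter fun p : Fin 4 × Fin 4 => p.1 < p.2).image
      (fun p => Pi.single p.1 2 + Pi.single p.2 2) ∪
    (univ.filter fun p : Fin 4 × Fin 4 => p.1 < p.2).image
      (fun p => Pi.single p.1 2 - Pi.single p.2 2)

/-- Twice the covectors of `F₄⁺`. -/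
def doubledF4 : Finset (Fin 4 → ℤ) := doubledShort ∪ doubledLong

lemma disjoint_doubledShort_doubledLong : Disjoint doubledShort doubledLong := by
  decide +kernel

/-- The number of long covectors among `v` and `w`. -/
def longCount (v w : Fin 4 → ℤ) : Fin 3 :=
  (if v ∈ doubledLong then 1 else 0) + if w ∈ doubledLong then 1 else 0

/-- Integral version of `pairWeight`: four times the coefficients of `s²`, `r s`, `r²` in the
weight of the pair. -/
def doubledPairWeight (v w : Fin 4 → ℤ) : Fin 3 → ℤ := Pi.single (longCount v w) (v ⬝ᵥ w)

/-- Integral version of `relationWeight`, with the encoding of `doubledPairWeight`. -/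
def doubledRelationWeight (v w : Fin 4 → ℤ) : Fin 3 → ℤ :=
  if v ⬝ᵥ w = 0 then doubledPairWeight v (v + w) else -doubledPairWeight v w

lemma doubledPairWeight_eq : ∀ v ∈ doubledF4, ∀ w ∈ doubledF4, v ≠ w →
    doubledPairWeight v w =
      (if v - w ∈ doubledF4 then doubledRelationWeight (v - w) w else 0) +
        (if w - v ∈ doubledF4 then doubledRelationWeight v (w - v) else 0) -
        if v + w ∈ doubledF4 then doubledRelationWeight v w else 0 := by
  decide +kernel

lemma doubledGram_doubledShort : doubledGram doubledShort = (12 : ℤ) • 1 := by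
  decide +kernel

lemma doubledGram_doubledLong : doubledGram doubledLong = (24 : ℤ) • 1 := by
  decide +kernel

lemma lie_doubledCubic_doubledShort : ∀ i j,
    ⁅doubledCubic doubledShort i, doubledCubic doubledShort j⁆ =
      (64 : ℤ) • (Matrix.single i j 1 - Matrix.single j i 1) := by
  decide +kernel

lemma lie_doubledCubic_doubledLong : ∀ i j,
    ⁅doubledCubic doubledLong i, doubledCubic doubledLong j⁆ =
      (512 : ℤ) • (Matrix.single i j 1 - Matrix.single j i 1) := by
  decide +kernel

lemma lie_doubledCubic_doubledShort_doubledLong : ∀ i j,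
    ⁅doubledCubic doubledShort i, doubledCubic doubledLong j⁆ +
        ⁅doubledCubic doubledLong i, doubledCubic doubledShort j⁆ =
      (384 : ℤ) • (Matrix.single i j 1 - Matrix.single j i 1) := by
  decide +kernel

lemma halve_single_two (i : Fin 4) : halve (Pi.single i 2) = esgl4 i := by
  ext j
  obtain rfl | h := eq_or_ne j i <;> simp [halve_apply, esgl4, *]

lemma halve_signs (b : Bool × Bool × Bool) :
    halve ![1, bif b.1 then 1 else -1, bif b.2.1 then 1 else -1, bif b.2.2 then 1 else -1] =
      halfvec b := by
  obtain ⟨b₁, b₂, b₃⟩ := b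
  ext i
  fin_cases i <;> cases b₁ <;> cases b₂ <;> cases b₃ <;>
    simp [halve_apply, halfvec, esgl4, sgn] <;> norm_num

lemma F4plus_eq_image_halve : F4plus = doubledF4.image halve := by
  simp only [F4plus, doubledF4, doubledShort, doubledLong, image_union, image_image,
    Function.comp_def, map_add, map_sub, halve_single_two, halve_signs]
  ext α
  simp only [mem_union]
  tauto

variable {r s : ℂ} {c : (Fin 4 → ℂ) → ℂ}

lemma multiplicity_halve_of_mem_doubledShort (hc1 : ∀ i, c (esgl4 i) = s)
    (hc2 : ∀ b, c (halfvec b) = s) : ∀ v ∈ doubledShort, c (halve v) = s := by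
  simp only [doubledShort, forall_mem_union, forall_mem_image, halve_single_two, halve_signs, hc1,
    hc2, implies_true, and_self]

lemma multiplicity_halve_of_mem_doubledLong
    (hc3 : ∀ p : Fin 4 × Fin 4, p.1 < p.2 →
      c (esgl4 p.1 + esgl4 p.2) = r ∧ c (esgl4 p.1 - esgl4 p.2) = r) :
    ∀ v ∈ doubledLong, c (halve v) = r := by
  simp only [doubledLong, forall_mem_union, forall_mem_image, map_add, map_sub, halve_single_two,
    mem_filter, mem_univ, true_and]
  exact ⟨fun p hp => (hc3 p hp).1, fun p hp => (hc3 p hp).2⟩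

/-- The value at `(r, s)` of the quadratic form encoded as in `doubledPairWeight`. -/
def evalWeight (r s : ℂ) : (Fin 3 → ℤ) →+ ℂ where
  toFun u := (u 0 * s ^ 2 + u 1 * (r * s) + u 2 * r ^ 2) / 4
  map_zero' := by simp
  map_add' u v := by simp; ring

lemma evalWeight_apply (r s : ℂ) (u : Fin 3 → ℤ) :
    evalWeight r s u = (u 0 * s ^ 2 + u 1 * (r * s) + u 2 * r ^ 2) / 4 := rfl

variable (hs : ∀ v ∈ doubledShort, c (halve v) = s) (hr : ∀ v ∈ doubledLong, c (halve v) = r)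
include hs hr

lemma pairWeight_halve {v w : Fin 4 → ℤ} (hv : v ∈ doubledF4) (hw : w ∈ doubledF4) :
    pairWeight c (halve v) (halve w) = evalWeight r s (doubledPairWeight v w) := by
  have hc : ∀ v ∈ doubledF4, c (halve v) = if v ∈ doubledLong then r else s := by
    intro v hv
    split_ifs with hl
    · exact hr v hl
    · exact hs v ((mem_union.1 hv).resolve_right hl)
  rw [pairWeight, hc v hv, hc w hw, halve_dotProduct_halve, doubledPairWeight, longCount,
    evalWeight_apply]
  split_ifs <;> simp <;> ring

lemma relationWeight_halve {v w : Fin 4 → ℤ} (hv : v ∈ doubledF4) (hw : w ∈ doubledF4)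
    (hvw : v + w ∈ doubledF4) :
    relationWeight c (halve v) (halve w) = evalWeight r s (doubledRelationWeight v w) := by
  have hdot : halve v ⬝ᵥ halve w = 0 ↔ v ⬝ᵥ w = 0 := by
    simp [halve_dotProduct_halve]
  rw [relationWeight, doubledRelationWeight, ← map_add, pairWeight_halve hs hr hv hvw,
    pairWeight_halve hs hr hv hw, apply_ite (evalWeight r s), map_neg]
  simp only [hdot]

lemma ite_relationWeight_halve {v w : Fin 4 → ℤ} {P : Prop} [Decidable P]
    (h : P → v ∈ doubledF4 ∧ w ∈ doubledF4 ∧ v + w ∈ doubledF4) :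
    (if P then relationWeight c (halve v) (halve w) else 0) =
      evalWeight r s (if P then doubledRelationWeight v w else 0) := by
  split_ifs with hP
  · obtain ⟨hv, hw, hvw⟩ := h hP
    exact relationWeight_halve hs hr hv hw hvw
  · rw [map_zero]

lemma isThreeTermBalanced_F4plus : IsThreeTermBalanced F4plus c := by
  rw [F4plus_eq_image_halve, IsThreeTermBalanced, forall_mem_image]
  intro v hv
  rw [forall_mem_image]
  intro w hw hne
  have hvw : v ≠ w := fun h => hne (congr_arg halve h)
  simp only [← map_add, ← map_sub, halve_injective.mem_finset_image]
  rw [pairWeight_halve hs hr hv hw, doubledPairWeight_eq v hv w hw hvw, map_sub, map_add,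
    ite_relationWeight_halve hs hr fun h => ⟨h, hw, by rwa [sub_add_cancel]⟩,
    ite_relationWeight_halve hs hr fun h => ⟨hv, h, by rwa [add_sub_cancel]⟩,
    ite_relationWeight_halve hs hr fun h => ⟨hv, hw, h⟩]

lemma sum_F4plus {M : Type*} [AddCommMonoid M] [Module ℂ M] (f : (Fin 4 → ℂ) → M) :
    ∑ α ∈ F4plus, c α • f α =
      s • ∑ v ∈ doubledShort, f (halve v) + r • ∑ v ∈ doubledLong, f (halve v) := by
  rw [F4plus_eq_image_halve, sum_image halve_injective.injOn, doubledF4,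
    sum_union disjoint_doubledShort_doubledLong, smul_sum, smul_sum]
  congr 1
  · exact sum_congr rfl fun v hv => by rw [hs v hv]
  · exact sum_congr rfl fun v hv => by rw [hr v hv]

lemma gramMatrix_F4plus : gramMatrix F4plus c = (3 * (2 * r + s)) • 1 := by
  rw [gramMatrix, sum_F4plus hs hr, sum_vecMulVec_halve, sum_vecMulVec_halve,
    doubledGram_doubledShort, doubledGram_doubledLong]
  ext p q
  simp only [Matrix.smul_apply, Matrix.add_apply, Matrix.map_apply, Matrix.one_apply, smul_eq_mul]
  split_ifs <;> push_cast <;> ring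

lemma cubicMatrix_F4plus_one (i : Fin 4) :
    cubicMatrix F4plus c 1 i =
      (1 / 8 : ℂ) • (s • (doubledCubic doubledShort i).map (Int.cast : ℤ → ℂ) +
        r • (doubledCubic doubledLong i).map (Int.cast : ℤ → ℂ)) := by
  simp only [cubicMatrix, Pi.one_apply, mul_one, mul_smul]
  rw [sum_F4plus hs hr fun α => α i • Matrix.vecMulVec α α, sum_smul_vecMulVec_halve,
    sum_smul_vecMulVec_halve]
  module

lemma lie_cubicMatrix_F4plus_one (i j : Fin 4) :
    ⁅cubicMatrix F4plus c 1 i, cubicMatrix F4plus c 1 j⁆ =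
      ((2 * r + s) * (4 * r + s)) • (Matrix.single i j 1 - Matrix.single j i 1) := by
  have hadd : ∀ X Y : Matrix (Fin 4) (Fin 4) ℤ,
      X.map (Int.cast : ℤ → ℂ) + Y.map (Int.cast : ℤ → ℂ) = (X + Y).map (Int.cast : ℤ → ℂ) :=
    fun X Y => (Matrix.map_add _ Int.cast_add X Y).symm
  have hcast : ∀ n : ℤ,
      Matrix.map (n • (Matrix.single i j 1 - Matrix.single j i 1)) (Int.cast : ℤ → ℂ) =
        (n : ℂ) • (Matrix.single i j 1 - Matrix.single j i 1) := by
    intro n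
    ext p q
    simp only [Matrix.map_apply, Matrix.smul_apply, Matrix.sub_apply, Matrix.single_apply,
      smul_eq_mul]
    push_cast
    rfl
  rw [cubicMatrix_F4plus_one hs hr, cubicMatrix_F4plus_one hs hr, lie_smul_smul_add_smul]
  simp only [lie_map_intCast, hadd, lie_doubledCubic_doubledShort, lie_doubledCubic_doubledLong,
    lie_doubledCubic_doubledShort_doubledLong, hcast]
  push_cast
  module

end F4

/-- the positive half of `F₄` with multiplicity `s` on short roots and
`r` on long roots satisfies the trigonometric WDVV equations for
`λ² = 108(2r+s)²/(4r+s)`. -/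
theorem F4_satisfies_WDVV (r s : ℂ)
    (hrs : (2 * r + s) * (4 * r + s) ≠ 0)
    (c : (Fin 4 → ℂ) → ℂ)
    (hc1 : ∀ i : Fin 4, c (esgl4 i) = s)
    (hc2 : ∀ b : Bool × Bool × Bool, c (halfvec b) = s)
    (hc3 : ∀ p : Fin 4 × Fin 4, p.1 < p.2 →
      c (esgl4 p.1 + esgl4 p.2) = r ∧ c (esgl4 p.1 - esgl4 p.2) = r)
    (lam : ℂ) (hlam : lam ^ 2 = 108 * (2 * r + s) ^ 2 / (4 * r + s)) :
    SatisfiesWDVV F4plus c lam := by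
  obtain ⟨h2, h4⟩ := mul_ne_zero_iff.1 hrs
  have hs := multiplicity_halve_of_mem_doubledShort hc1 hc2
  have hr := multiplicity_halve_of_mem_doubledLong hc3
  refine (isThreeTermBalanced_F4plus hs hr).satisfiesWDVV (mul_ne_zero three_ne_zero h2)
    (gramMatrix_F4plus hs hr) (lie_cubicMatrix_F4plus_one hs hr) ?_
  rw [hlam, div_mul_eq_mul_div, div_eq_iff h4]
  ring

end
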